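/- For every G ∈ 𝒜_>, the set L^∞_G is both open and closed in M_F. -/

import Mathlib

open MeasureTheory Topology Set Pointwise

/-- The set of all real-valued measurable functions on `X`, as a subtype. -/
abbrev Mble (X : Type*) [MeasurableSpace X] : Type _ := {f : X → ℝ // Measurable f}

/-- The basic set `B(f, A, ε)`: all `g` such that for some measurable null set `N`,
`sup_{x ∈ A \ N} |f x - g x| < ε`. -/
def FBall {X : Type*} [MeasurableSpace X] (μ : Measure X) (f : Mble X) (A : Set X)
    (ε : ℝ) : Set (Mble X) :=
  {g | ∃ N : Set X, MeasurableSet N ∧ μ N = 0 ∧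
        ∃ b : ℝ, b < ε ∧ ∀ x ∈ A \ N, |f.1 x - g.1 x| ≤ b}

/-- The `F_μ`-topology on `Mble X`, generated by the sets `B(f, A, ε)` with
`A` measurable of finite measure and `ε > 0`. -/
def FTop {X : Type*} [MeasurableSpace X] (μ : Measure X) : TopologicalSpace (Mble X) :=
  TopologicalSpace.generateFrom
    {S | ∃ (f : Mble X) (A : Set X) (ε : ℝ),
        MeasurableSet A ∧ μ A < ⊤ ∧ 0 < ε ∧ S = FBall μ f A ε}

/-- A `μ`-atom: a measurable set of positive measure admitting no decomposition into two
disjoint measurable pieces of positive measure. -/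
def MuAtom {X : Type*} [MeasurableSpace X] (μ : Measure X) (A : Set X) : Prop :=
  MeasurableSet A ∧ 0 < μ A ∧
    ¬ ∃ B C : Set X, MeasurableSet B ∧ MeasurableSet C ∧ Disjoint B C ∧
        B ∪ C = A ∧ 0 < μ B ∧ 0 < μ C

/-- `G` is a union of finitely many `μ`-atoms. -/
def FinAtomUnion {X : Type*} [MeasurableSpace X] (μ : Measure X) (G : Set X) : Prop :=
  ∃ (n : ℕ) (F : Fin n → Set X), (∀ i, MuAtom μ (F i)) ∧ G = ⋃ i, F i

/-- `L^∞_G`: the measurable functions that are essentially bounded on `G`. -/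
def Linf {X : Type*} [MeasurableSpace X] (μ : Measure X) (G : Set X) : Set (Mble X) :=
  {f | ∃ M₀ : ℝ, 0 < M₀ ∧ ∃ N : Set X, MeasurableSet N ∧ μ N = 0 ∧
        ∀ x ∈ G \ N, |f.1 x| ≤ M₀}

/-- The intersection `⋂_{G ∈ 𝒜_>} L^∞_G`. -/
def InterLinf {X : Type*} [MeasurableSpace X] (μ : Measure X) : Set (Mble X) :=
  ⋂ G ∈ {A : Set X | MeasurableSet A ∧ 0 < μ A ∧ μ A < ⊤}, Linf μ G

/-- The zero function as an element of `Mble X`. -/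
def zeroM {X : Type*} [MeasurableSpace X] : Mble X := ⟨fun _ => 0, measurable_const⟩

/-- `μ` is hemifinite: some sequence in `𝒜_>` almost contains every member of `𝒜_>`. -/
def Hemifinite {X : Type*} [MeasurableSpace X] (μ : Measure X) : Prop :=
  ∃ A : ℕ → Set X, (∀ n, MeasurableSet (A n) ∧ 0 < μ (A n) ∧ μ (A n) < ⊤) ∧
    ∀ F : Set X, MeasurableSet F → 0 < μ F → μ F < ⊤ → ∃ n, μ (F \ A n) = 0

/-- `G⁺`: functions strictly positive μ-almost everywhere on `G`. -/
def Gplus {X : Type*} [MeasurableSpace X] (μ : Measure X) (G : Set X) : Set (Mble X) :=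
  {f | ∃ N : Set X, MeasurableSet N ∧ μ N = 0 ∧ ∀ x ∈ G \ N, 0 < f.1 x}

/-- `G⁰`: functions nonnegative μ-almost everywhere on `G`. -/
def Gzero {X : Type*} [MeasurableSpace X] (μ : Measure X) (G : Set X) : Set (Mble X) :=
  {f | ∃ N : Set X, MeasurableSet N ∧ μ N = 0 ∧ ∀ x ∈ G \ N, 0 ≤ f.1 x}

instance {X : Type*} [MeasurableSpace X] : Add (Mble X) :=
  ⟨fun f g => ⟨f.1 + g.1, f.2.add g.2⟩⟩

section EssentialBounds

variable {X : Type*} [MeasurableSpace X] {μ : Measure X}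

lemma exists_null_forall_mem_diff_iff_ae {A : Set X} {p : X → Prop} :
    (∃ N, MeasurableSet N ∧ μ N = 0 ∧ ∀ x ∈ A \ N, p x) ↔ ∀ᵐ x ∂μ, x ∈ A → p x := by
  constructor
  · rintro ⟨N, -, hN, hp⟩
    filter_upwards [measure_eq_zero_iff_ae_notMem.1 hN] with x hxN hxA
    exact hp x ⟨hxA, hxN⟩
  · intro hp
    obtain ⟨N, hsub, hNmeas, hN⟩ := exists_measurable_superset_of_null (ae_iff.1 hp)
    exact ⟨N, hNmeas, hN, fun x hx => by_contra fun hpx => hx.2 (hsub fun h => hpx (h hx.1))⟩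

lemma mem_fBall_iff_ae {f g : Mble X} {A : Set X} {ε : ℝ} :
    g ∈ FBall μ f A ε ↔ ∃ b < ε, ∀ᵐ x ∂μ, x ∈ A → |f.1 x - g.1 x| ≤ b := by
  simp only [FBall, mem_ofPred_eq, ← exists_null_forall_mem_diff_iff_ae]
  constructor
  · rintro ⟨N, hNmeas, hN, b, hb, hfg⟩
    exact ⟨b, hb, N, hNmeas, hN, hfg⟩
  · rintro ⟨b, hb, N, hNmeas, hN, hfg⟩
    exact ⟨N, hNmeas, hN, b, hb, hfg⟩

lemma mem_linf_iff_ae {f : Mble X} {G : Set X} :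
    f ∈ Linf μ G ↔ ∃ M, ∀ᵐ x ∂μ, x ∈ G → |f.1 x| ≤ M := by
  simp only [Linf, mem_ofPred_eq, exists_null_forall_mem_diff_iff_ae]
  constructor
  · rintro ⟨M, -, hM⟩
    exact ⟨M, hM⟩
  · rintro ⟨M, hM⟩
    exact ⟨max M 1, by positivity, hM.mono fun x hx hxG => le_max_of_le_left (hx hxG)⟩

end EssentialBounds

section FBall

variable {X : Type*} [MeasurableSpace X] {μ : Measure X} {f g : Mble X} {A B : Set X} {ε : ℝ}

lemma self_mem_fBall (hε : 0 < ε) : f ∈ FBall μ f A ε :=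
  mem_fBall_iff_ae.2 ⟨0, hε, by simp⟩

lemma mem_fBall_comm : g ∈ FBall μ f A ε ↔ f ∈ FBall μ g A ε := by
  simp only [mem_fBall_iff_ae, abs_sub_comm]

lemma fBall_anti_set (hAB : A ⊆ B) : FBall μ f B ε ⊆ FBall μ f A ε := by
  rintro g ⟨N, hNmeas, hN, b, hb, hfg⟩
  exact ⟨N, hNmeas, hN, b, hb, fun x hx => hfg x ⟨hAB hx.1, hx.2⟩⟩

lemma fBall_subset_linf (hf : f ∈ Linf μ A) : FBall μ f A ε ⊆ Linf μ A := by
  intro g hg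
  obtain ⟨b, -, hfg⟩ := mem_fBall_iff_ae.1 hg
  obtain ⟨M, hfM⟩ := mem_linf_iff_ae.1 hf
  refine mem_linf_iff_ae.2 ⟨M + b, ?_⟩
  filter_upwards [hfg, hfM] with x hfgx hfMx hxA
  calc |g.1 x| = |f.1 x - (f.1 x - g.1 x)| := by rw [sub_sub_cancel]
    _ ≤ |f.1 x| + |f.1 x - g.1 x| := abs_sub _ _
    _ ≤ M + b := add_le_add (hfMx hxA) (hfgx hxA)

end FBall

section FTop

variable {X : Type*} [MeasurableSpace X] {μ : Measure X} {A : Set X} {ε : ℝ} {S : Set (Mble X)}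

lemma isOpen_fBall (f : Mble X) (hAmeas : MeasurableSet A) (hA : μ A < ⊤) (hε : 0 < ε) :
    IsOpen[FTop μ] (FBall μ f A ε) :=
  TopologicalSpace.isOpen_generateFrom_of_mem ⟨f, A, ε, hAmeas, hA, hε, rfl⟩

lemma isOpen_of_forall_fBall_subset (hA : μ A < ⊤) (hε : 0 < ε)
    (hS : ∀ f ∈ S, FBall μ f A ε ⊆ S) : IsOpen[FTop μ] S := by
  let _ := FTop μ
  have hA' : μ (toMeasurable μ A) < ⊤ := by rwa [measure_toMeasurable]
  exact isOpen_iff_forall_mem_open.2 fun f hf =>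
    ⟨FBall μ f (toMeasurable μ A) ε,
      (fBall_anti_set (subset_toMeasurable μ A)).trans (hS f hf),
      isOpen_fBall f (measurableSet_toMeasurable μ A) hA' hε, self_mem_fBall hε⟩

-- By symmetry of the balls, the complement of a set stable under them is stable under them too.
lemma isClosed_of_forall_fBall_subset (hA : μ A < ⊤) (hε : 0 < ε)
    (hS : ∀ f ∈ S, FBall μ f A ε ⊆ S) : IsClosed[FTop μ] S := by
  let _ := FTop μ
  exact isOpen_compl_iff.1 <| isOpen_of_forall_fBall_subset hA hε
    fun f hf g hg hgS => hf (hS g hgS (mem_fBall_comm.1 hg))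

end FTop

theorem stmt2_general {X : Type*} [MeasurableSpace X] (μ : Measure X) (G : Set X)
    (hGfin : μ G < ⊤) : IsOpen[FTop μ] (Linf μ G) ∧ IsClosed[FTop μ] (Linf μ G) :=
  ⟨isOpen_of_forall_fBall_subset hGfin one_pos fun _ => fBall_subset_linf,
    isClosed_of_forall_fBall_subset hGfin one_pos fun _ => fBall_subset_linf⟩

/-- For every `G ∈ 𝒜_>`, `L^∞_G` is clopen in `M_F`. -/
theorem stmt2 {X : Type*} [MeasurableSpace X] (μ : Measure X)
    (hpos : 0 < μ Set.univ)
    (hsub : ∀ A : Set X, MeasurableSet A → μ A = ⊤ →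
      ∃ B, B ⊆ A ∧ MeasurableSet B ∧ 0 < μ B ∧ μ B < ⊤)
    (G : Set X) (hG : MeasurableSet G) (hG0 : 0 < μ G) (hGfin : μ G < ⊤) :
    IsOpen[FTop μ] (Linf μ G) ∧ IsClosed[FTop μ] (Linf μ G) :=
  stmt2_general μ G hGfin
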